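/- Fix a positive integer q. Let p be a positive integer and f_0, …, f_{p−1} polynomials with rational coefficients such that o_P(q;n) = f_{n mod p}(n) for every integer n ≥ 0. Then the number of connected components of (B°)^q \ ⋃A_P^q (equivalently, the number of labelled nonattacking configuration types of q pieces) equals f_{p−1}(−1), the value at n = −1 of the constituent corresponding to n ≡ −1 (mod p). -/

import Mathlib

open MeasureTheory Pointwise

/-!
Write `T = n + 1`. The placements counted by `o_P(q; n)` are the points of `T⁻¹ • ℤ^(2 * q)` in the
complement of the move arrangement, and this complement is the disjoint union of finitely many
bounded open convex cells bounded by rational hyperplanes, one for each connected component. The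
residue `-1` at `n = -1` is the residue `0` at `T = 0`, so it suffices that the lattice point count
of such a cell in `ℝ^d` has a constituent of residue `0` with value `(-1)^d` at `0`: as `d = 2 * q`
is even, every cell contributes `1`.

This is proved one coordinate at a time. A piecewise quasi-polynomial on the cone over the cell is
paired with the function on real points given by the value at `0` of its residue-`0` constituent
along the ray through the point. Summing the former over a coordinate integrates the latter with
respect to the Euler characteristic, and an open interval has Euler characteristic `-1`.
-/

namespace Ehrhart

/-! ### Quasi-polynomials -/

/-- `s` agrees, on the positive multiples of some period, with a polynomial whose value at `0` is
`c`. For a quasi-polynomial `s` this says that its constituent of residue `0` has value `c` at `0`;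
nothing is required of the other residue classes. -/
def HasZeroConstituent (s : ℕ → ℚ) (c : ℚ) : Prop :=
  ∃ N : ℕ, 0 < N ∧ ∃ P : Polynomial ℚ, P.eval 0 = c ∧ ∀ t, 0 < t → N ∣ t → s t = P.eval (t : ℚ)

namespace HasZeroConstituent

variable {s s' : ℕ → ℚ} {c c' : ℚ}

theorem const (c : ℚ) : HasZeroConstituent (fun _ => c) c :=
  ⟨1, one_pos, Polynomial.C c, by simp, by simp⟩

theorem congr (h : HasZeroConstituent s c) (hs : ∀ t, 0 < t → s' t = s t) :
    HasZeroConstituent s' c := by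
  obtain ⟨N, hN, P, hP, hsP⟩ := h
  exact ⟨N, hN, P, hP, fun t ht hNt => (hs t ht).trans (hsP t ht hNt)⟩

theorem add (h : HasZeroConstituent s c) (h' : HasZeroConstituent s' c') :
    HasZeroConstituent (s + s') (c + c') := by
  obtain ⟨N, hN, P, rfl, hs⟩ := h
  obtain ⟨N', hN', P', rfl, hs'⟩ := h'
  refine ⟨N * N', by positivity, P + P', Polynomial.eval_add, fun t ht hNt => ?_⟩
  rw [Pi.add_apply, hs t ht (dvd_of_mul_right_dvd hNt), hs' t ht (dvd_of_mul_left_dvd hNt),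
    Polynomial.eval_add]

theorem mul (h : HasZeroConstituent s c) (h' : HasZeroConstituent s' c') :
    HasZeroConstituent (s * s') (c * c') := by
  obtain ⟨N, hN, P, rfl, hs⟩ := h
  obtain ⟨N', hN', P', rfl, hs'⟩ := h'
  refine ⟨N * N', by positivity, P * P', Polynomial.eval_mul, fun t ht hNt => ?_⟩
  rw [Pi.mul_apply, hs t ht (dvd_of_mul_right_dvd hNt), hs' t ht (dvd_of_mul_left_dvd hNt),
    Polynomial.eval_mul]

theorem sum {α : Type*} (A : Finset α) {s : α → ℕ → ℚ} {c : α → ℚ}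
    (h : ∀ a ∈ A, HasZeroConstituent (s a) (c a)) :
    HasZeroConstituent (∑ a ∈ A, s a) (∑ a ∈ A, c a) := by
  classical
  induction A using Finset.induction_on with
  | empty => exact const 0
  | insert a A ha ih =>
    rw [Finset.sum_insert ha, Finset.sum_insert ha]
    exact (h a (A.mem_insert_self a)).add (ih fun b hb => h b (Finset.mem_insert_of_mem hb))

/-- Both `P` and the shifted constituent `f (p - 1)` describe `s` on the multiples of `N * p`. -/
theorem eq_eval_neg_one (h : HasZeroConstituent s c) {p : ℕ} (hp : 0 < p)
    {f : ℕ → Polynomial ℚ} (hf : ∀ n : ℕ, s (n + 1) = (f (n % p)).eval (n : ℚ)) :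
    c = (f (p - 1)).eval (-1) := by
  obtain ⟨N, hN, P, rfl, hs⟩ := h
  let multiple (k : ℕ) : ℚ := ((N * p * (k + 1) : ℕ) : ℚ)
  have multiple_injective : multiple.Injective := fun a b hab => by
    have := Nat.eq_of_mul_eq_mul_left (by positivity) (Nat.cast_injective hab)
    omega
  have eval_multiple (k : ℕ) :
      P.eval (multiple k) = ((f (p - 1)).comp (Polynomial.X - 1)).eval (multiple k) := by
    have hpos : 0 < N * p * (k + 1) := by positivity
    obtain ⟨n, hn⟩ := Nat.exists_eq_add_one.mpr hpos
    have hmod : n % p = p - 1 := by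
      have hdvd : p ∣ n % p + 1 := by
        rw [← Nat.dvd_add_right (dvd_mul_right p (n / p)), ← add_assoc, Nat.div_add_mod, ← hn]
        exact (dvd_mul_left p N).mul_right _
      have := Nat.le_of_dvd (Nat.succ_pos _) hdvd
      have := Nat.mod_lt n hp
      omega
    have hn_cast : multiple k - 1 = n := by simp only [multiple, hn]; push_cast; ring
    calc P.eval (multiple k) = s (n + 1) := by
          rw [← hn, hs _ hpos ((dvd_mul_right N p).mul_right _)]
      _ = (f (p - 1)).eval (n : ℚ) := by rw [hf, hmod]
      _ = _ := by simp [← hn_cast]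
  have hPf : P = (f (p - 1)).comp (Polynomial.X - 1) :=
    Polynomial.eq_of_infinite_eval_eq _ _ <|
      (Set.infinite_range_of_injective multiple_injective).mono <|
        Set.range_subset_iff.mpr eval_multiple
  simp [hPf]

end HasZeroConstituent

/-- The algebra of multivariate quasi-polynomials: polynomial expressions in the coordinates and in
functions which are periodic under a full-rank lattice `N • ℤ^ι`. -/
noncomputable def quasiPoly (ι : Type*) : Subalgebra ℚ ((ι → ℤ) → ℚ) :=
  Algebra.adjoin ℚ (Set.range (fun i v => (v i : ℚ)) ∪
    {f | ∃ N : ℕ, 0 < N ∧ ∀ w, Function.Periodic f (N • w)})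

/-- Integer maps which are affine with a common linear part on each coset of some `D • ℤ^ι`;
the model case is the rounding of a rational linear form. -/
def IsQuasiaffine {ι κ : Type*} (u : (ι → ℤ) → κ → ℤ) : Prop :=
  ∃ D : ℕ, 0 < D ∧ ∃ m : (ι → ℤ) →ₗ[ℤ] κ → ℤ, ∀ x w, u (x + D • w) = u x + m w

namespace quasiPoly

variable {ι κ : Type*} {f : (ι → ℤ) → ℚ}

theorem coord_mem (i : ι) : (fun v => (v i : ℚ)) ∈ quasiPoly ι :=
  Algebra.subset_adjoin (Or.inl ⟨i, rfl⟩)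

theorem mem_of_periodic {N : ℕ} (hN : 0 < N) (hf : ∀ w, Function.Periodic f (N • w)) :
    f ∈ quasiPoly ι :=
  Algebra.subset_adjoin (Or.inr ⟨N, hN, hf⟩)

theorem polynomial_mem (P : Polynomial ℚ) (hf : f ∈ quasiPoly ι) :
    (fun v => P.eval (f v)) ∈ quasiPoly ι := by
  induction P using Polynomial.induction_on' with
  | add P Q hP hQ =>
    simp only [Polynomial.eval_add]
    exact add_mem hP hQ
  | monomial k a =>
    simp only [Polynomial.eval_monomial]
    exact mul_mem (algebraMap_mem (quasiPoly ι) a) (pow_mem hf k)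

theorem linearMap_mem [Finite ι] (m : (ι → ℤ) →ₗ[ℤ] ℤ) : (fun v => (m v : ℚ)) ∈ quasiPoly ι := by
  classical
  have := Fintype.ofFinite ι
  have hm : (fun v => (m v : ℚ)) = ∑ i, (fun v : ι → ℤ => (v i : ℚ)) *
      algebraMap ℚ _ (m (fun j => if i = j then 1 else 0) : ℚ) := by
    ext v
    rw [LinearMap.pi_apply_eq_sum_univ m v]
    simp
  rw [hm]
  exact sum_mem fun i _ => mul_mem (coord_mem i) (algebraMap_mem _ _)

theorem comp_mem [Finite ι] {u : (ι → ℤ) → κ → ℤ} (hu : IsQuasiaffine u) {f : (κ → ℤ) → ℚ}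
    (hf : f ∈ quasiPoly κ) : (fun x => f (u x)) ∈ quasiPoly ι := by
  obtain ⟨D, hD, m, hm⟩ := hu
  induction hf using Algebra.adjoin_induction with
  | algebraMap a => exact algebraMap_mem (quasiPoly ι) a
  | add f g _ _ hf hg => exact add_mem hf hg
  | mul f g _ _ hf hg => exact mul_mem hf hg
  | mem f hf =>
    rcases hf with ⟨i, rfl⟩ | ⟨N, hN, hf⟩
    · have hperiodic : (fun x => (u x i : ℚ) - (m x i : ℚ) / D) ∈ quasiPoly ι := by
        refine mem_of_periodic hD fun w x => ?_
        rw [hm, map_add, map_nsmul, Pi.add_apply, Pi.add_apply, Pi.smul_apply, nsmul_eq_mul]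
        push_cast
        field_simp
        ring
      have hlinear := mul_mem (linearMap_mem (LinearMap.proj i ∘ₗ m))
        (algebraMap_mem (quasiPoly ι) (D : ℚ)⁻¹)
      convert add_mem hperiodic hlinear using 1
      ext x
      simp [div_eq_mul_inv]
    · refine mem_of_periodic (Nat.mul_pos hD hN) fun w x => ?_
      rw [mul_nsmul', hm, map_nsmul]
      exact hf (m w) (u x)

theorem hasZeroConstituent (hf : f ∈ quasiPoly ι) (w : ι → ℤ) :
    HasZeroConstituent (fun t => f (t • w)) (f 0) := by
  induction hf using Algebra.adjoin_induction with
  | algebraMap a => exact .const a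
  | add f g _ _ hf hg => exact hf.add hg
  | mul f g _ _ hf hg => exact hf.mul hg
  | mem f hf =>
    rcases hf with ⟨i, rfl⟩ | ⟨N, hN, hf⟩
    · exact ⟨1, one_pos, Polynomial.C (w i : ℚ) * Polynomial.X, by simp, by simp [mul_comm]⟩
    · refine ⟨N, hN, Polynomial.C (f 0), by simp, ?_⟩
      rintro _ - ⟨k, rfl⟩
      simpa [mul_smul] using hf (k • w) 0

theorem shift_mem [Finite ι] (w : ι → ℤ) (hf : f ∈ quasiPoly ι) :
    (fun v => f (v + w)) ∈ quasiPoly ι :=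
  comp_mem ⟨1, one_pos, LinearMap.id, fun v v' => by simp [add_right_comm]⟩ hf

variable [DecidableEq ι]

theorem mem_span_pow_mul_periodic (i : ι) (hf : f ∈ quasiPoly ι) :
    f ∈ Submodule.span ℚ {g | ∃ k : ℕ, ∃ N > 0, ∃ c ∈ quasiPoly ι,
      Function.Periodic c (N • Pi.single i 1) ∧ g = fun v => (v i : ℚ) ^ k * c v} := by
  rw [quasiPoly, ← Subalgebra.mem_toSubmodule, Algebra.adjoin_eq_span] at hf
  refine Submodule.span_mono (fun g hg => ?_) hf
  induction hg using Submonoid.closure_induction with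
  | one => exact ⟨0, 1, one_pos, 1, one_mem _, fun _ => rfl, by simp; rfl⟩
  | mul g g' _ _ hg hg' =>
    obtain ⟨k, N, hN, c, hc, hcN, rfl⟩ := hg
    obtain ⟨k', N', hN', c', hc', hcN', rfl⟩ := hg'
    refine ⟨k + k', N * N', Nat.mul_pos hN hN', c * c', mul_mem hc hc', ?_, ?_⟩
    · have h := hcN.nsmul N'
      have h' := hcN'.nsmul N
      rw [smul_smul, mul_comm] at h
      rw [smul_smul] at h'
      exact h.mul h'
    · ext v
      simp only [Pi.mul_apply]
      ring
  | mem g hg =>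
    rcases hg with ⟨j, rfl⟩ | ⟨N, hN, hg⟩
    · by_cases hj : j = i
      · exact ⟨1, 1, one_pos, 1, one_mem _, fun _ => rfl, by simp [hj]⟩
      · exact ⟨0, 1, one_pos, _, coord_mem j, fun v => by simp [Pi.single_eq_of_ne hj], by simp⟩
    · exact ⟨0, N, hN, g, mem_of_periodic hN hg, hg _, by simp⟩

end quasiPoly

theorem exists_polynomial_antidifference (k : ℕ) {N : ℕ} (hN : 0 < N) :
    ∃ P : Polynomial ℚ, ∀ y : ℚ, P.eval (y + N) - P.eval y = y ^ k := by
  have hN' : (N : ℚ) ≠ 0 := by positivity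
  refine ⟨Polynomial.C ((N : ℚ) ^ k / (k + 1)) *
    (Polynomial.bernoulli (k + 1)).comp (Polynomial.C (N : ℚ)⁻¹ * Polynomial.X), fun y => ?_⟩
  have hbernoulli := Polynomial.bernoulli_eval_one_add (k + 1) ((N : ℚ)⁻¹ * y)
  simp only [Polynomial.eval_mul, Polynomial.eval_C, Polynomial.eval_comp, Polynomial.eval_X]
  rw [show (N : ℚ)⁻¹ * (y + N) = 1 + (N : ℚ)⁻¹ * y by field_simp; ring, hbernoulli,
    Nat.add_sub_cancel, mul_pow, inv_pow]
  push_cast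
  field_simp
  ring

namespace quasiPoly

variable {ι : Type*} {f : (ι → ℤ) → ℚ}

theorem exists_antidifference [Finite ι] [DecidableEq ι] (i : ι) (hf : f ∈ quasiPoly ι) :
    ∃ G ∈ quasiPoly ι, ∀ v, G (v + Pi.single i 1) - G v = f v := by
  replace hf := mem_span_pow_mul_periodic i hf
  induction hf using Submodule.span_induction with
  | zero => exact ⟨0, zero_mem _, by simp⟩
  | add f g _ _ hf hg =>
    obtain ⟨F, hF, hFf⟩ := hf
    obtain ⟨G, hG, hGg⟩ := hg
    refine ⟨F + G, add_mem hF hG, fun v => ?_⟩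
    simp only [Pi.add_apply, ← hFf, ← hGg]
    ring
  | smul a f _ hf =>
    obtain ⟨F, hF, hFf⟩ := hf
    exact ⟨a • F, (quasiPoly ι).smul_mem hF a, fun v => by simp [← hFf, mul_sub]⟩
  | mem f hf =>
    obtain ⟨k, N, hN, c, hc, hcN, rfl⟩ := hf
    obtain ⟨P, hP⟩ := exists_polynomial_antidifference k hN
    let F (v : ι → ℤ) : ℚ := P.eval (v i : ℚ) * c v
    have hF : F ∈ quasiPoly ι := mul_mem (polynomial_mem P (coord_mem i)) hc
    have hFN (v : ι → ℤ) : F (v + N • Pi.single i 1) - F v = (v i : ℚ) ^ k * c v := by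
      have hi : ((v + N • Pi.single i 1 : ι → ℤ) i : ℚ) = v i + N := by simp
      simp only [F, hi, hcN v, ← hP, sub_mul]
    refine ⟨∑ j ∈ Finset.range N, fun v => F (v + j • Pi.single i 1),
      sum_mem fun j _ => shift_mem _ hF, fun v => ?_⟩
    have htelescope := Finset.sum_range_sub (fun j : ℕ => F (v + j • Pi.single i 1)) N
    rw [zero_smul, add_zero, hFN] at htelescope
    simpa only [Finset.sum_apply, add_assoc, ← succ_nsmul', ← Finset.sum_sub_distrib]
      using htelescope

theorem exists_sum_Ioo_eq {n : ℕ} {f : (Fin (n + 1) → ℤ) → ℚ} (hf : f ∈ quasiPoly (Fin (n + 1))) :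
    ∃ G ∈ quasiPoly (Fin (n + 1)), ∀ (x : Fin n → ℤ) (a b : ℤ), a < b →
      ∑ y ∈ Finset.Ioo a b, f (Fin.cons y x) = G (Fin.cons b x) - G (Fin.cons (a + 1) x) := by
  obtain ⟨G, hG, hGf⟩ := exists_antidifference 0 hf
  have cons_add_single (y : ℤ) (x : Fin n → ℤ) :
      (Fin.cons y x : Fin (n + 1) → ℤ) + Pi.single 0 1 = Fin.cons (y + 1) x := by
    ext i
    cases i using Fin.cases <;> simp
  refine ⟨G, hG, fun x a b hab => ?_⟩
  induction b, Int.add_one_le_of_lt hab using Int.leInduction with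
  | base => rw [Finset.Ioo_add_one_right_eq_Ioc, Finset.Ioc_self, Finset.sum_empty, sub_self]
  | succ b hb ih =>
    rw [Finset.Ioo_add_one_right_eq_Ioc, ← Finset.Ioo_insert_right (Int.lt_of_add_one_le hb),
      Finset.sum_insert Finset.right_notMem_Ioo, ih hb, ← hGf, cons_add_single]
    ring

end quasiPoly

/-- The linear form `x ↦ ∑ i, l i * x i` with rational coefficients, evaluated at real points. -/
noncomputable def linForm {ι : Type*} [Fintype ι] : (ι → ℚ) →ₗ[ℚ] (ι → ℝ) →ₗ[ℝ] ℝ :=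
  LinearMap.mk₂' ℚ ℝ (fun l x => ∑ i, (l i : ℝ) * x i)
    (fun l k x => by simp [add_mul, Finset.sum_add_distrib])
    (fun a l x => by simp [mul_assoc, Finset.mul_sum, Rat.smul_def])
    (fun l x y => by simp [mul_add, Finset.sum_add_distrib])
    (fun a l x => by simp [mul_left_comm, Finset.mul_sum])

theorem linForm_apply {ι : Type*} [Fintype ι] (l : ι → ℚ) (x : ι → ℝ) :
    linForm l x = ∑ i, (l i : ℝ) * x i :=
  rfl

theorem linForm_single {ι : Type*} [Fintype ι] [DecidableEq ι] (i : ι) (a : ℚ) (x : ι → ℝ) :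
    linForm (Pi.single i a) x = a * x i := by
  rw [linForm_apply, Finset.sum_eq_single_of_mem i (Finset.mem_univ i)
    fun j _ hj => by simp [Pi.single_eq_of_ne hj], Pi.single_eq_same]

theorem linForm_cons {n : ℕ} (l : Fin (n + 1) → ℚ) (y : ℝ) (x : Fin n → ℝ) :
    linForm l (Fin.cons y x) = l 0 * y + linForm (Fin.tail l) x := by
  simp [linForm_apply, Fin.sum_univ_succ, Fin.tail]

theorem linForm_snoc {n : ℕ} (l : Fin n → ℚ) (a : ℚ) (x : Fin n → ℝ) (y : ℝ) :
    linForm (Fin.snoc l a : Fin (n + 1) → ℚ) (Fin.snoc x y) = linForm l x + a * y := by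
  simp [linForm_apply, Fin.sum_univ_castSucc]

theorem exists_linForm_add_smul {ι : Type*} [Fintype ι] (l : ι → ℚ) :
    ∃ D : ℕ, 0 < D ∧ ∃ m : (ι → ℤ) →ₗ[ℤ] ℤ, ∀ x w : ι → ℤ,
      linForm l (Int.cast ∘ (x + D • w)) = linForm l (Int.cast ∘ x) + m w := by
  let D : ℕ := ∏ i, (l i).den
  have hD (i : ι) : ∃ a : ℤ, (l i * D : ℝ) = a := by
    obtain ⟨b, hb⟩ := Finset.dvd_prod_of_mem (fun i => (l i).den) (Finset.mem_univ i)
    refine ⟨(l i).num * b, ?_⟩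
    have hnum : (l i : ℝ) * (l i).den = (l i).num := by exact_mod_cast (l i).mul_den_eq_num
    rw [show D = (l i).den * b from hb]
    push_cast
    rw [← mul_assoc, hnum]
  choose a ha using hD
  refine ⟨D, Finset.prod_pos fun i _ => (l i).pos, ∑ i, a i • LinearMap.proj i, fun x w => ?_⟩
  simp only [linForm_apply, Function.comp_apply, Pi.add_apply, Pi.smul_apply, LinearMap.sum_apply,
    LinearMap.smul_apply, LinearMap.proj_apply, smul_eq_mul, Int.cast_sum, Int.cast_mul, ← ha,
    ← Finset.sum_add_distrib]
  refine Finset.sum_congr rfl fun i _ => ?_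
  push_cast [nsmul_eq_mul]
  ring

theorem IsQuasiaffine.cons_of_add_smul {n D : ℕ} (hD : 0 < D) {u : (Fin n → ℤ) → ℤ}
    {m : (Fin n → ℤ) →ₗ[ℤ] ℤ} (hu : ∀ x w, u (x + D • w) = u x + m w) :
    IsQuasiaffine fun x => (Fin.cons (u x) x : Fin (n + 1) → ℤ) := by
  refine ⟨D, hD, LinearMap.pi (Fin.cons m fun i => D • LinearMap.proj i), fun x w => ?_⟩
  ext i
  cases i using Fin.cases <;> simp [hu, -nsmul_eq_mul]

theorem quasiPoly.exists_finsum_Ioo_linForm {n : ℕ} {f : (Fin (n + 1) → ℤ) → ℚ}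
    (hf : f ∈ quasiPoly (Fin (n + 1))) (l u : Fin n → ℚ) :
    ∃ g ∈ quasiPoly (Fin n), g 0 = -f 0 ∧
      ∀ x : Fin n → ℤ, linForm l (Int.cast ∘ x) < linForm u (Int.cast ∘ x) →
        ∑ᶠ y ∈ (Int.cast ⁻¹' Set.Ioo (linForm l (Int.cast ∘ x)) (linForm u (Int.cast ∘ x)) : Set ℤ),
          f (Fin.cons y x) = g x := by
  obtain ⟨G, hG, hGf⟩ := exists_sum_Ioo_eq hf
  obtain ⟨D, hD, m, hm⟩ := exists_linForm_add_smul l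
  obtain ⟨D', hD', m', hm'⟩ := exists_linForm_add_smul u
  have hlower : IsQuasiaffine fun x : Fin n → ℤ =>
      (Fin.cons (⌊linForm l (Int.cast ∘ x)⌋ + 1) x : Fin (n + 1) → ℤ) :=
    .cons_of_add_smul hD fun x w => by rw [hm, Int.floor_add_intCast, add_right_comm]
  have hupper : IsQuasiaffine fun x : Fin n → ℤ =>
      (Fin.cons ⌈linForm u (Int.cast ∘ x)⌉ x : Fin (n + 1) → ℤ) :=
    .cons_of_add_smul hD' fun x w => by rw [hm', Int.ceil_add_intCast]
  refine ⟨_, sub_mem (comp_mem hupper hG) (comp_mem hlower hG), ?_, fun x hlu => ?_⟩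
  · have hcast : (Int.cast ∘ (0 : Fin n → ℤ) : Fin n → ℝ) = 0 := by ext; simp
    have hcons : (Fin.cons 0 0 : Fin (n + 1) → ℤ) = 0 := by ext i; cases i using Fin.cases <;> simp
    have hsum := hGf 0 (-1) 1 (by norm_num)
    rw [show Finset.Ioo (-1 : ℤ) 1 = {0} from rfl, Finset.sum_singleton, hcons] at hsum
    simp [hcast, hcons, hsum]
  · rw [Int.preimage_Ioo, ← Finset.coe_Ioo, finsum_mem_coe_finset, hGf _ _ _
      (Int.floor_lt_ceil_of_lt hlu)]
    rfl

/-! ### Integration with respect to the Euler characteristic -/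

open Filter Topology in
/-- `c` is the integral of `φ` with respect to the Euler characteristic: `φ` has a limit `ψ y` from
the right at each `y`, differs from `ψ` at finitely many points only, and `c` is the sum of these
differences. For step functions of bounded support this is the usual Euler integral. -/
def HasEulerIntegral (φ : ℝ → ℚ) (c : ℚ) : Prop :=
  ∃ ψ : ℝ → ℚ, (∀ y, ∀ᶠ z in 𝓝[>] y, φ z = ψ y) ∧ (φ - ψ).support.Finite ∧ ∑ᶠ y, (φ - ψ) y = c

namespace HasEulerIntegral

variable {φ φ' : ℝ → ℚ} {a b c c' : ℚ}

theorem zero : HasEulerIntegral 0 0 :=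
  ⟨0, by simp, by simp, by simp⟩

theorem add (h : HasEulerIntegral φ c) (h' : HasEulerIntegral φ' c') :
    HasEulerIntegral (φ + φ') (c + c') := by
  obtain ⟨ψ, hψ, hfin, rfl⟩ := h
  obtain ⟨ψ', hψ', hfin', rfl⟩ := h'
  refine ⟨ψ + ψ', fun y => ?_, ?_, ?_⟩
  · filter_upwards [hψ y, hψ' y] with z hz hz'
    simp only [Pi.add_apply, hz, hz']
  · rw [add_sub_add_comm]
    exact (hfin.union hfin').subset (Function.support_add _ _)
  · rw [add_sub_add_comm]
    exact finsum_add_distrib hfin hfin'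

theorem smul (a : ℚ) (h : HasEulerIntegral φ c) : HasEulerIntegral (a • φ) (a * c) := by
  obtain ⟨ψ, hψ, hfin, rfl⟩ := h
  refine ⟨a • ψ, fun y => ?_, ?_, ?_⟩
  · filter_upwards [hψ y] with z hz
    simp only [Pi.smul_apply, hz]
  · rw [← smul_sub]
    exact hfin.subset (Function.support_const_smul_subset _ _)
  · rw [← smul_sub]
    exact (smul_finsum a _).symm

theorem unique (h : HasEulerIntegral φ c) (h' : HasEulerIntegral φ c') : c = c' := by
  obtain ⟨ψ, hψ, -, rfl⟩ := h
  obtain ⟨ψ', hψ', -, rfl⟩ := h'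
  have hψψ' : ψ = ψ' := by
    ext y
    obtain ⟨z, hz, hz'⟩ := ((hψ y).and (hψ' y)).exists
    exact hz.symm.trans hz'
  rw [hψψ']

theorem indicator_Ioo {a b : ℝ} (hab : a < b) (c : ℚ) :
    HasEulerIntegral ((Set.Ioo a b).indicator fun _ => c) (-c) := by
  have hdiff : (Set.Ioo a b).indicator (fun _ => c) - (Set.Ico a b).indicator (fun _ => c) =
      Pi.single a (-c) := by
    ext y
    rcases eq_or_ne y a with rfl | hy
    · simp [hab]
    · simp [Set.indicator_apply, hy, lt_iff_le_and_ne, hy.symm]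
  refine ⟨(Set.Ico a b).indicator fun _ => c, fun y => ?_, ?_, ?_⟩
  · rcases lt_or_ge y a with hya | hay
    · filter_upwards [Ioo_mem_nhdsGT hya] with z hz
      rw [Set.indicator_of_notMem fun h => hz.2.not_gt h.1,
        Set.indicator_of_notMem fun h => hya.not_ge h.1]
    rcases lt_or_ge y b with hyb | hby
    · filter_upwards [Ioo_mem_nhdsGT hyb] with z hz
      rw [Set.indicator_of_mem (Set.mem_Ioo.mpr ⟨hay.trans_lt hz.1, hz.2⟩),
        Set.indicator_of_mem (Set.mem_Ico.mpr ⟨hay, hyb⟩)]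
    · filter_upwards [self_mem_nhdsWithin] with z hz
      rw [Set.indicator_of_notMem fun h => (hby.trans_lt hz).not_gt h.2,
        Set.indicator_of_notMem fun h => hby.not_gt h.2]
  · exact hdiff ▸ Set.Finite.subset (Set.finite_singleton a) Pi.support_single_subset
  · rw [hdiff, finsum_eq_single _ a fun y hy => Pi.single_eq_of_ne hy _, Pi.single_eq_same]

end HasEulerIntegral

/-- Families of bounded intervals whose endpoints depend on `x` through rational linear forms, with
a case distinction according to the signs of rational linear forms. These are the fibres of rational
polyhedral cones which are bounded in the direction of the fibre. -/
inductive PiecewiseIoo {n : ℕ} : ((Fin n → ℝ) → Set ℝ) → Prop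
  | Ioo (l u : Fin n → ℚ) : PiecewiseIoo fun x => Set.Ioo (linForm l x) (linForm u x)
  | ite (k : Fin n → ℚ) {A B : (Fin n → ℝ) → Set ℝ} : PiecewiseIoo A → PiecewiseIoo B →
      PiecewiseIoo fun x => if 0 < linForm k x then A x else B x

namespace PiecewiseIoo

variable {n : ℕ} {A : (Fin n → ℝ) → Set ℝ}

theorem Ioo_inter_Ioi (l u v : Fin n → ℚ) :
    PiecewiseIoo fun x => Set.Ioo (linForm l x) (linForm u x) ∩ Set.Ioi (linForm v x) := by
  convert ite (v - l) (Ioo v u) (Ioo l u) using 2 with x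
  rw [Set.Ioo_inter_Ioi]
  split_ifs with h <;> simp only [map_sub, LinearMap.sub_apply, sub_pos, not_lt] at h
  · rw [max_eq_right h.le]
  · rw [max_eq_left h]

theorem Ioo_inter_Iio (l u v : Fin n → ℚ) :
    PiecewiseIoo fun x => Set.Ioo (linForm l x) (linForm u x) ∩ Set.Iio (linForm v x) := by
  convert ite (u - v) (Ioo l v) (Ioo l u) using 2 with x
  rw [Set.Ioo_inter_Iio]
  split_ifs with h <;> simp only [map_sub, LinearMap.sub_apply, sub_pos, not_lt] at h
  · rw [min_eq_right h.le]
  · rw [min_eq_left h]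

theorem inter_halfspace (hA : PiecewiseIoo A) (k : Fin (n + 1) → ℚ) :
    PiecewiseIoo fun x => A x ∩ {y | 0 < linForm k (Fin.cons y x)} := by
  induction hA with
  | ite k' _ _ hA hB =>
    convert ite k' hA hB using 2 with x
    dsimp only
    split_ifs <;> rfl
  | Ioo l u =>
    have hroot (x : Fin n → ℝ) :
        linForm (-(k 0)⁻¹ • Fin.tail k) x = -linForm (Fin.tail k) x / k 0 := by
      simp [Rat.smul_def, div_eq_inv_mul]
    simp only [linForm_cons]
    rcases lt_trichotomy (k 0) 0 with hk | hk | hk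
    · have hk' : (k 0 : ℝ) < 0 := by exact_mod_cast hk
      convert Ioo_inter_Iio l u (-(k 0)⁻¹ • Fin.tail k) using 3 with x
      ext y
      rw [hroot, Set.mem_Iio, lt_div_iff_of_neg hk', Set.mem_ofPred_eq, neg_lt_iff_pos_add,
        mul_comm]
    · convert ite (Fin.tail k) (Ioo l u) (Ioo 0 0) using 2 with x
      split_ifs with h <;> simp [hk, h]
    · have hk' : (0 : ℝ) < k 0 := by exact_mod_cast hk
      convert Ioo_inter_Ioi l u (-(k 0)⁻¹ • Fin.tail k) using 3 with x
      ext y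
      rw [hroot, Set.mem_Ioi, div_lt_iff₀ hk', Set.mem_ofPred_eq, neg_lt_iff_pos_add, mul_comm]

theorem finite_preimage_intCast (hA : PiecewiseIoo A) (x : Fin n → ℝ) :
    (Int.cast ⁻¹' A x : Set ℤ).Finite := by
  induction hA with
  | Ioo l u =>
    rw [Int.preimage_Ioo]
    exact Set.finite_Ioo _ _
  | ite k _ _ hA hB =>
    dsimp only
    split_ifs
    exacts [hA, hB]

end PiecewiseIoo

/-- The indicator function of `S`, both on integer points and on real points. -/
noncomputable def indicatorPair {ι : Type*} (S : Set (ι → ℝ)) :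
    ((ι → ℤ) → ℚ) × ((ι → ℝ) → ℚ) :=
  (((Int.cast ∘ · : (ι → ℤ) → ι → ℝ) ⁻¹' S).indicator 1, S.indicator 1)

theorem indicatorPair_inter {ι : Type*} (S T : Set (ι → ℝ)) :
    indicatorPair (S ∩ T) = indicatorPair S * indicatorPair T := by
  simp only [indicatorPair, Set.preimage_inter, Set.inter_indicator_one, Prod.mk_mul_mk]

theorem indicatorPair_univ {ι : Type*} : indicatorPair (Set.univ : Set (ι → ℝ)) = 1 := by
  simp only [indicatorPair, Set.preimage_univ, Set.indicator_univ, Prod.mk_one_one]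

/-- Pairs `(f, φ)` such that `f` is a quasi-polynomial on each face of some central rational
hyperplane arrangement, while on each face `φ` is constant, equal to the value at `0` of the
quasi-polynomial by which `f` is given there. -/
noncomputable def piecewiseQuasiPoly (ι : Type*) [Fintype ι] :
    Subalgebra ℚ (((ι → ℤ) → ℚ) × ((ι → ℝ) → ℚ)) :=
  Algebra.adjoin ℚ ((fun f => (f, fun _ => f 0)) '' quasiPoly ι ∪
    Set.range fun l => indicatorPair {x | 0 < linForm l x})

/-- `F'` is obtained from `F` by summing the first component over the integer points, and
integrating the second component with respect to the Euler characteristic, over the fibres `A x`. -/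
def IsFibreIntegral {n : ℕ} (A : (Fin n → ℝ) → Set ℝ)
    (F : ((Fin (n + 1) → ℤ) → ℚ) × ((Fin (n + 1) → ℝ) → ℚ))
    (F' : ((Fin n → ℤ) → ℚ) × ((Fin n → ℝ) → ℚ)) : Prop :=
  (∀ x : Fin n → ℤ,
    F'.1 x = ∑ᶠ y ∈ (Int.cast ⁻¹' A (Int.cast ∘ x) : Set ℤ), F.1 (Fin.cons y x)) ∧
  ∀ x : Fin n → ℝ, HasEulerIntegral ((A x).indicator fun y => F.2 (Fin.cons y x)) (F'.2 x)

theorem isFibreIntegral_mul_indicatorPair {n : ℕ} {A : (Fin n → ℝ) → Set ℝ}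
    {F : ((Fin (n + 1) → ℤ) → ℚ) × ((Fin (n + 1) → ℝ) → ℚ)}
    {F' : ((Fin n → ℤ) → ℚ) × ((Fin n → ℝ) → ℚ)} (S : Set (Fin (n + 1) → ℝ)) :
    IsFibreIntegral A (F * indicatorPair S) F' ↔
      IsFibreIntegral (fun x => A x ∩ {y | Fin.cons y x ∈ S}) F F' := by
  refine and_congr (forall_congr' fun x => ?_) (forall_congr' fun x => ?_)
  · rw [Set.preimage_inter, finsum_mem_def, finsum_mem_def, ← Set.indicator_indicator]
    congr! 4
    ext y
    by_cases hy : (Fin.cons (y : ℝ) (Int.cast ∘ x) : Fin (n + 1) → ℝ) ∈ S <;>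
      simp [indicatorPair, Fin.comp_cons, hy]
  · rw [← Set.indicator_indicator]
    congr! 2
    ext y
    by_cases hy : (Fin.cons y x : Fin (n + 1) → ℝ) ∈ S <;> simp [indicatorPair, hy]

namespace piecewiseQuasiPoly

section Fintype

variable {ι : Type*} [Fintype ι]

theorem quasiPoly_mem {f : (ι → ℤ) → ℚ} (hf : f ∈ quasiPoly ι) :
    (f, fun _ => f 0) ∈ piecewiseQuasiPoly ι :=
  Algebra.subset_adjoin (Or.inl ⟨f, hf, rfl⟩)

theorem indicatorPair_mem (l : ι → ℚ) :
    indicatorPair {x | 0 < linForm l x} ∈ piecewiseQuasiPoly ι :=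
  Algebra.subset_adjoin (Or.inr ⟨l, rfl⟩)

theorem hasZeroConstituent {F : ((ι → ℤ) → ℚ) × ((ι → ℝ) → ℚ)} (hF : F ∈ piecewiseQuasiPoly ι)
    (w : ι → ℤ) : HasZeroConstituent (fun t => F.1 (t • w)) (F.2 (Int.cast ∘ w)) := by
  induction hF using Algebra.adjoin_induction with
  | algebraMap a => exact .const a
  | add F G _ _ hF hG => exact hF.add hG
  | mul F G _ _ hF hG => exact hF.mul hG
  | mem F hF =>
    rcases hF with ⟨f, hf, rfl⟩ | ⟨l, rfl⟩
    · exact quasiPoly.hasZeroConstituent hf w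
    · refine (HasZeroConstituent.const _).congr fun t ht => ?_
      have hcast : (Int.cast ∘ (t • w) : ι → ℝ) = (t : ℝ) • (Int.cast ∘ w) := by ext; simp
      simp [indicatorPair, Set.indicator_apply, hcast, ht, -nsmul_eq_mul]

theorem mem_span_mul_indicatorPair {F : ((ι → ℤ) → ℚ) × ((ι → ℝ) → ℚ)}
    (hF : F ∈ piecewiseQuasiPoly ι) :
    F ∈ Submodule.span ℚ {F | ∃ g ∈ quasiPoly ι, ∃ L : List (ι → ℚ),
      F = (g, fun _ => g 0) * indicatorPair {x | ∀ k ∈ L, 0 < linForm k x}} := by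
  rw [piecewiseQuasiPoly, ← Subalgebra.mem_toSubmodule, Algebra.adjoin_eq_span] at hF
  refine Submodule.span_mono (fun F hF => ?_) hF
  induction hF using Submonoid.closure_induction with
  | one => exact ⟨1, one_mem _, [], by simp [indicatorPair_univ]; rfl⟩
  | mul F G _ _ hF hG =>
    obtain ⟨f, hf, L, rfl⟩ := hF
    obtain ⟨g, hg, L', rfl⟩ := hG
    refine ⟨f * g, mul_mem hf hg, L ++ L', ?_⟩
    simp only [List.forall_mem_append, Set.ofPred_and, indicatorPair_inter]
    rw [mul_mul_mul_comm]
    rfl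
  | mem F hF =>
    rcases hF with ⟨g, hg, rfl⟩ | ⟨l, rfl⟩
    · exact ⟨g, hg, [], by simp [indicatorPair_univ]⟩
    · refine ⟨1, one_mem _, [l], ?_⟩
      simp only [List.forall_mem_singleton]
      exact (one_mul _).symm

end Fintype

variable {n : ℕ} {A : (Fin n → ℝ) → Set ℝ}

theorem exists_isFibreIntegral_of_quasiPoly (hA : PiecewiseIoo A) {f : (Fin (n + 1) → ℤ) → ℚ}
    (hf : f ∈ quasiPoly (Fin (n + 1))) :
    ∃ F' ∈ piecewiseQuasiPoly (Fin n), IsFibreIntegral A (f, fun _ => f 0) F' := by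
  induction hA with
  | Ioo l u =>
    obtain ⟨g, hg, hg0, hsum⟩ := quasiPoly.exists_finsum_Ioo_linForm hf l u
    refine ⟨(g, fun _ => g 0) * indicatorPair {x | 0 < linForm (u - l) x},
      mul_mem (quasiPoly_mem hg) (indicatorPair_mem _), fun x => ?_, fun x => ?_⟩
    · by_cases hlu : linForm l (Int.cast ∘ x) < linForm u (Int.cast ∘ x)
      · simp [indicatorPair, hlu, ← hsum x hlu]
      · simp [indicatorPair, hlu]
    · by_cases hlu : linForm l x < linForm u x
      · simpa [indicatorPair, hlu, hg0] using HasEulerIntegral.indicator_Ioo hlu (f 0)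
      · simpa [indicatorPair, hlu, Set.Ioo_eq_empty hlu] using! HasEulerIntegral.zero
  | ite k _ _ hA hB =>
    obtain ⟨F, hF, hFsum, hFint⟩ := hA
    obtain ⟨G, hG, hGsum, hGint⟩ := hB
    have hk := indicatorPair_mem k
    refine ⟨F * indicatorPair {x | 0 < linForm k x} +
      G * (1 - indicatorPair {x | 0 < linForm k x}), add_mem (mul_mem hF hk)
      (mul_mem hG (sub_mem (one_mem _) hk)), fun x => ?_, fun x => ?_⟩
    · by_cases hkx : 0 < linForm k (Int.cast ∘ x)
      · simp [indicatorPair, hkx, hFsum]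
      · simp [indicatorPair, hkx, hGsum]
    · by_cases hkx : 0 < linForm k x
      · simpa [indicatorPair, hkx] using hFint x
      · simpa [indicatorPair, hkx] using hGint x

theorem exists_isFibreIntegral {F : ((Fin (n + 1) → ℤ) → ℚ) × ((Fin (n + 1) → ℝ) → ℚ)}
    (hF : F ∈ piecewiseQuasiPoly (Fin (n + 1))) (hA : PiecewiseIoo A) :
    ∃ F' ∈ piecewiseQuasiPoly (Fin n), IsFibreIntegral A F F' := by
  replace hF := mem_span_mul_indicatorPair hF
  induction hF using Submodule.span_induction with
  | zero => exact ⟨0, zero_mem _, by simp, fun x => by simpa using! HasEulerIntegral.zero⟩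
  | smul a F _ hF =>
    obtain ⟨F', hF', hsum, hint⟩ := hF
    refine ⟨a • F', (piecewiseQuasiPoly _).smul_mem hF' a, fun x => ?_, fun x => ?_⟩
    · simp only [Prod.smul_fst, Pi.smul_apply, hsum, smul_eq_mul]
      exact mul_finsum_mem _ _
    · convert (hint x).smul a using 1
      · exact Set.indicator_const_smul (A x) a fun y => F.2 (Fin.cons y x)
      · rfl
  | add F G _ _ hF hG =>
    obtain ⟨F', hF', hFsum, hFint⟩ := hF
    obtain ⟨G', hG', hGsum, hGint⟩ := hG
    refine ⟨F' + G', add_mem hF' hG', fun x => ?_, fun x => ?_⟩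
    · simp only [Prod.fst_add, Pi.add_apply, hFsum, hGsum]
      exact (finsum_mem_add_distrib (hA.finite_preimage_intCast _)).symm
    · convert (hFint x).add (hGint x) using 1
      · exact Set.indicator_add _ _ _
      · rfl
  | mem F hF =>
    obtain ⟨f, hf, L, rfl⟩ := hF
    simp only [isFibreIntegral_mul_indicatorPair]
    refine exists_isFibreIntegral_of_quasiPoly ?_ hf
    induction L with
    | nil => simpa using hA
    | cons k L ih =>
      convert ih.inter_halfspace k using 2 with x
      ext y
      simp [and_comm, and_left_comm]

end piecewiseQuasiPoly

theorem exists_eq_Ioo_of_isOpen_of_convex {s : Set ℝ} (ho : IsOpen s) (hc : Convex ℝ s)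
    (hne : s.Nonempty) (hb : BddBelow s) (ha : BddAbove s) : ∃ a b, a < b ∧ s = Set.Ioo a b := by
  have hs : s = Set.Ioo (sInf s) (sSup s) := by
    refine subset_antisymm ?_
      (IsConnected.Ioo_csInf_csSup_subset ⟨hne, hc.isPreconnected⟩ hb ha)
    rw [← interior_Icc]
    exact ho.subset_interior_iff.mpr fun y hy => ⟨csInf_le hb hy, le_csSup ha hy⟩
  exact ⟨_, _, Set.nonempty_Ioo.mp (hs ▸ hne), hs⟩

theorem sum_piFinset_succ {n : ℕ} {α β : Type*} [AddCommMonoid β] (s : Finset α)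
    (g : (Fin (n + 1) → α) → β) :
    ∑ x ∈ Fintype.piFinset (fun _ => s), g x =
      ∑ x ∈ Fintype.piFinset (fun _ : Fin n => s), ∑ y ∈ s, g (Fin.cons y x) := by
  rw [Finset.sum_comm, ← Finset.sum_product']
  refine (Finset.sum_equiv (Fin.consEquiv fun _ => α) (fun x => ?_) fun x _ => rfl).symm
  simp [Fin.forall_fin_succ]

theorem hasEulerIntegral_convex {n : ℕ} {R : Set (Fin (n + 1) → ℝ)} (ho : IsOpen R)
    (hc : Convex ℝ R) {K : ℝ} (hK : ∀ x ∈ R, ∀ i, |x i| < K) (c : ℚ) (x : Fin n → ℝ) :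
    HasEulerIntegral (fun y => R.indicator (fun _ => c) (Fin.cons y x))
      ((Fin.tail '' R).indicator (fun _ => -c) x) := by
  set s : Set ℝ := {y | Fin.cons y x ∈ R}
  change HasEulerIntegral (s.indicator fun _ => c) _
  have hmem : x ∈ Fin.tail '' R ↔ s.Nonempty :=
    ⟨fun ⟨z, hz, hzx⟩ => ⟨z 0, by simpa [s, ← hzx] using hz⟩, fun ⟨y, hy⟩ => ⟨_, hy, by simp⟩⟩
  rcases s.eq_empty_or_nonempty with hs | hs
  · rw [Set.indicator_of_notMem (hmem.not.mpr (by simp [hs])), hs, Set.indicator_empty]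
    exact HasEulerIntegral.zero
  rw [Set.indicator_of_mem (hmem.mpr hs)]
  have hs_open : IsOpen s := ho.preimage (by fun_prop)
  have hs_convex : Convex ℝ s := fun y hy z hz a b ha hb hab => by
    change Fin.cons _ _ ∈ R
    convert hc hy hz ha hb hab using 1
    ext i
    cases i using Fin.cases <;> simp [← add_mul, hab]
  have hs_bdd (y : ℝ) (hy : y ∈ s) : -K < y ∧ y < K := abs_lt.mp (hK _ hy 0)
  obtain ⟨a, b, hab, hsab⟩ := exists_eq_Ioo_of_isOpen_of_convex hs_open hs_convex hs
    ⟨-K, fun y hy => (hs_bdd y hy).1.le⟩ ⟨K, fun y hy => (hs_bdd y hy).2.le⟩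
  exact hsab ▸ HasEulerIntegral.indicator_Ioo hab c

theorem exists_sum_Ioo_cons_eq {n : ℕ}
    {F : ((Fin (n + 2) → ℤ) → ℚ) × ((Fin (n + 2) → ℝ) → ℚ)}
    (hF : F ∈ piecewiseQuasiPoly (Fin (n + 2))) {R : Set (Fin (n + 1) → ℝ)} (ho : IsOpen R)
    (hc : Convex ℝ R) {K : ℕ} (hK : ∀ x ∈ R, ∀ i, |x i| < K) {c : ℚ}
    (hFR : ∀ x, F.2 (Fin.snoc x 1) = R.indicator (fun _ => c) x) :
    ∃ F' ∈ piecewiseQuasiPoly (Fin (n + 1)),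
      (∀ (x : Fin n → ℤ) (T : ℤ), F'.1 (Fin.snoc x T) =
        ∑ y ∈ Finset.Ioo (-(K * T)) (K * T), F.1 (Fin.snoc (Fin.cons y x : Fin (n + 1) → ℤ) T)) ∧
      ∀ x, F'.2 (Fin.snoc x 1) = (Fin.tail '' R).indicator (fun _ => -c) x := by
  have hA := PiecewiseIoo.Ioo (Pi.single (Fin.last n) (-K : ℚ)) (Pi.single (Fin.last n) (K : ℚ))
  obtain ⟨F', hF', hsum, hint⟩ := piecewiseQuasiPoly.exists_isFibreIntegral hF hA
  refine ⟨F', hF', fun x T => ?_, fun x => (hint _).unique ?_⟩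
  · have hIoo : (Int.cast ⁻¹' Set.Ioo (((-K : ℚ) : ℝ) * T) (((K : ℚ) : ℝ) * T) : Set ℤ) =
        Finset.Ioo (-(K * T)) (K * T) := by
      ext y
      simp only [Set.mem_preimage, Set.mem_Ioo, Finset.coe_Ioo]
      norm_cast
      simp
    rw [hsum, Fin.comp_snoc]
    dsimp only
    rw [linForm_single, linForm_single, Fin.snoc_last, hIoo, finsum_mem_coe_finset]
    simp only [Fin.cons_snoc_eq_snoc_cons]
  · convert hasEulerIntegral_convex ho hc hK c x using 1
    ext y
    rw [Set.indicator_apply, Fin.cons_snoc_eq_snoc_cons, hFR, ite_eq_left_iff]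
    refine fun hy => (Set.indicator_of_notMem (fun hyR => hy ?_) _).symm
    simpa [linForm_single] using abs_lt.mp (hK _ hyR 0)

theorem hasZeroConstituent_sum_box {n : ℕ}
    {F : ((Fin (n + 1) → ℤ) → ℚ) × ((Fin (n + 1) → ℝ) → ℚ)}
    (hF : F ∈ piecewiseQuasiPoly (Fin (n + 1))) {R : Set (Fin n → ℝ)} (ho : IsOpen R)
    (hc : Convex ℝ R) (hne : R.Nonempty) {K : ℕ} (hK : ∀ x ∈ R, ∀ i, |x i| < K) {c : ℚ}
    (hFR : ∀ x, F.2 (Fin.snoc x 1) = R.indicator (fun _ => c) x) :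
    HasZeroConstituent (fun T => ∑ x ∈ Fintype.piFinset fun _ => Finset.Ioo (-(K * T : ℤ)) (K * T),
      F.1 (Fin.snoc x (T : ℤ))) ((-1) ^ n * c) := by
  induction n generalizing c with
  | zero =>
    obtain ⟨x, hx⟩ := hne
    have hsnoc {α : Type} (y : Fin 0 → α) (a : α) : (Fin.snoc y a : Fin 1 → α) = fun _ => a := by
      ext i
      rw [Fin.fin_one_eq_zero i]
      rfl
    have hc : F.2 (Int.cast ∘ fun _ => 1) = c := by
      rw [← Set.indicator_of_mem hx fun _ => c, ← hFR, hsnoc]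
      simp [Function.comp_def]
    rw [pow_zero, one_mul, ← hc]
    refine (piecewiseQuasiPoly.hasZeroConstituent hF fun _ => 1).congr fun T _ => ?_
    simp [hsnoc, Pi.mul_def]
  | succ n ih =>
    obtain ⟨F', hF', hsum, hF'R⟩ := exists_sum_Ioo_cons_eq hF ho hc hK hFR
    let π := LinearMap.funLeft ℝ ℝ (Fin.succ : Fin n → Fin (n + 1))
    have hπ : Function.Surjective π :=
      LinearMap.funLeft_surjective_of_injective ℝ ℝ _ (Fin.succ_injective n)
    have h := ih (R := π '' R) hF' (π.isOpenMap_of_finiteDimensional hπ _ ho) (hc.linear_image π)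
      (hne.image π) (Set.forall_mem_image.mpr fun x hx i => hK x hx i.succ) hF'R
    rw [pow_succ, mul_neg_one, neg_mul_comm]
    refine h.congr fun T _ => ?_
    simp only [sum_piFinset_succ, hsum]

/-! ### Lattice points of rational sets -/

/-- The affine functions `x ↦ c + ∑ i, l i * x i` with rational coefficients. -/
noncomputable def rationalAffine (ι : Type*) [Fintype ι] : Submodule ℚ ((ι → ℝ) → ℝ) where
  carrier := {f | ∃ (c : ℚ) (l : ι → ℚ), ∀ x, f x = c + linForm l x}
  zero_mem' := ⟨0, 0, by simp⟩
  add_mem' := by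
    rintro f g ⟨c, l, hf⟩ ⟨d, k, hg⟩
    exact ⟨c + d, l + k, fun x => by simp [hf, hg, add_add_add_comm]⟩
  smul_mem' := by
    rintro a f ⟨c, l, hf⟩
    exact ⟨a * c, a • l, fun x => by simp [hf, Rat.smul_def]⟩

theorem const_mem_rationalAffine {ι : Type*} [Fintype ι] (c : ℚ) :
    (fun _ => (c : ℝ)) ∈ rationalAffine ι :=
  ⟨c, 0, by simp⟩

theorem eval_mem_rationalAffine {ι : Type*} [Fintype ι] (i : ι) :
    (fun x => x i) ∈ rationalAffine ι := by
  classical exact ⟨0, Pi.single i 1, fun x => by simp [linForm_single]⟩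

/-- The Boolean combinations of open half-spaces bounded by rational hyperplanes. -/
noncomputable def rationalSets (ι : Type*) [Fintype ι] : BooleanSubalgebra (Set (ι → ℝ)) :=
  BooleanSubalgebra.closure ((fun f => {x | 0 < f x}) '' (rationalAffine ι : Set ((ι → ℝ) → ℝ)))

theorem setOf_pos_mem_rationalSets {ι : Type*} [Fintype ι] {f : (ι → ℝ) → ℝ}
    (hf : f ∈ rationalAffine ι) : {x | 0 < f x} ∈ rationalSets ι :=
  BooleanSubalgebra.subset_closure ⟨f, hf, rfl⟩

/-- `F` is the indicator function of the cone over `R × {1}`, at integer points with positive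
last coordinate and at real points with last coordinate `1`. -/
def IsConeIndicator {d : ℕ} (R : Set (Fin d → ℝ))
    (F : ((Fin (d + 1) → ℤ) → ℚ) × ((Fin (d + 1) → ℝ) → ℚ)) : Prop :=
  (∀ (z : Fin d → ℤ) (T : ℕ), 0 < T →
    F.1 (Fin.snoc z (T : ℤ)) = R.indicator 1 ((T : ℝ)⁻¹ • (Int.cast ∘ z))) ∧
  ∀ x, F.2 (Fin.snoc x 1) = R.indicator 1 x

theorem exists_isConeIndicator {d : ℕ} {R : Set (Fin d → ℝ)} (hR : R ∈ rationalSets (Fin d)) :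
    ∃ F ∈ piecewiseQuasiPoly (Fin (d + 1)), IsConeIndicator R F := by
  induction hR using BooleanSubalgebra.closure_bot_sup_induction with
  | mem R hR =>
    obtain ⟨f, ⟨c, l, hf⟩, rfl⟩ := hR
    refine ⟨_, piecewiseQuasiPoly.indicatorPair_mem (Fin.snoc l c), fun z T hT => ?_, fun x => ?_⟩
    · have hT' : (0 : ℝ) < T := by exact_mod_cast hT
      have hpos : 0 < linForm l (Int.cast ∘ z) + c * T ↔
          0 < (c : ℝ) + (T : ℝ)⁻¹ * linForm l (Int.cast ∘ z) := by
        rw [← mul_pos_iff_of_pos_left hT' (b := (c : ℝ) + _), mul_add, mul_inv_cancel_left₀ hT'.ne',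
          add_comm, mul_comm (c : ℝ)]
      simp [indicatorPair, Set.indicator_apply, Fin.comp_snoc, linForm_snoc, hf, hpos]
    · simp [indicatorPair, Set.indicator_apply, linForm_snoc, hf, add_comm]
  | bot => exact ⟨0, zero_mem _, by simp [IsConeIndicator]⟩
  | sup R _ S _ hR hS =>
    obtain ⟨F, hF, hF1, hF2⟩ := hR
    obtain ⟨G, hG, hG1, hG2⟩ := hS
    have hRS : (R ∪ S).indicator (1 : (Fin d → ℝ) → ℚ) =
        R.indicator 1 + S.indicator 1 - R.indicator 1 * S.indicator 1 := by
      rw [← Set.inter_indicator_one, eq_sub_iff_add_eq, Set.indicator_union_add_inter]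
    refine ⟨F + G - F * G, sub_mem (add_mem hF hG) (mul_mem hF hG), fun z T hT => ?_, fun x => ?_⟩
    · simp [hRS, hF1 z T hT, hG1 z T hT]
    · simp [hRS, hF2, hG2]
  | compl R _ hR =>
    obtain ⟨F, hF, hF1, hF2⟩ := hR
    refine ⟨1 - F, sub_mem (one_mem _) hF, fun z T hT => ?_, fun x => ?_⟩
    · simp [hF1 z T hT, Set.indicator_compl]
    · simp [hF2, Set.indicator_compl]

/-- The points `z` of `ℤ^d` with `z / T ∈ R`. -/
def latticePoints {d : ℕ} (R : Set (Fin d → ℝ)) (T : ℕ) : Set (Fin d → ℤ) :=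
  {z | (T : ℝ)⁻¹ • (Int.cast ∘ z : Fin d → ℝ) ∈ R}

theorem mem_piFinset_of_mem_latticePoints {d : ℕ} {R : Set (Fin d → ℝ)} {K T : ℕ}
    (hK : ∀ x ∈ R, ∀ i, |x i| < K) (hT : 0 < T) {z : Fin d → ℤ} (hz : z ∈ latticePoints R T) :
    z ∈ Fintype.piFinset fun _ => Finset.Ioo (-(K * T : ℤ)) (K * T) := by
  have hT' : (0 : ℝ) < T := by exact_mod_cast hT
  simp only [Fintype.mem_piFinset, Finset.mem_Ioo, ← abs_lt]
  intro i
  have h := hK _ hz i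
  simp only [Pi.smul_apply, Function.comp_apply, smul_eq_mul, abs_mul, abs_inv, Nat.abs_cast] at h
  rw [inv_mul_lt_iff₀ hT', mul_comm] at h
  exact_mod_cast h

theorem exists_nat_abs_lt_of_isBounded {ι : Type*} [Finite ι] {R : Set (ι → ℝ)}
    (hb : Bornology.IsBounded R) : ∃ K : ℕ, ∀ x ∈ R, ∀ i, |x i| < K := by
  have := Fintype.ofFinite ι
  obtain ⟨r, hr⟩ := hb.exists_norm_le
  obtain ⟨K, hrK⟩ := exists_nat_gt r
  exact ⟨K, fun x hx i => ((norm_le_pi_norm x i).trans (hr x hx)).trans_lt hrK⟩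

theorem finite_latticePoints {d : ℕ} {R : Set (Fin d → ℝ)} (hb : Bornology.IsBounded R) {T : ℕ}
    (hT : 0 < T) : (latticePoints R T).Finite := by
  obtain ⟨K, hK⟩ := exists_nat_abs_lt_of_isBounded hb
  exact (Finset.finite_toSet _).subset fun z hz => mem_piFinset_of_mem_latticePoints hK hT hz

theorem hasZeroConstituent_ncard_latticePoints {d : ℕ} {R : Set (Fin d → ℝ)}
    (hR : R ∈ rationalSets (Fin d)) (ho : IsOpen R) (hc : Convex ℝ R) (hne : R.Nonempty)
    (hb : Bornology.IsBounded R) :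
    HasZeroConstituent (fun T => (latticePoints R T).ncard) ((-1) ^ d) := by
  obtain ⟨F, hF, hF1, hF2⟩ := exists_isConeIndicator hR
  obtain ⟨K, hK⟩ := exists_nat_abs_lt_of_isBounded hb
  rw [← mul_one ((-1) ^ d)]
  refine (hasZeroConstituent_sum_box hF ho hc hne hK hF2).congr fun T hT => ?_
  classical
  have hcoe : latticePoints R T =
      ({z ∈ Fintype.piFinset fun _ => Finset.Ioo (-(K * T : ℤ)) (K * T) |
        z ∈ latticePoints R T} : Finset _) := by
    rw [Finset.coe_filter]
    exact Set.ext fun z => (and_iff_right_of_imp (mem_piFinset_of_mem_latticePoints hK hT)).symm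
  rw [hcoe, Set.ncard_coe_finset, ← Finset.sum_boole]
  exact Finset.sum_congr rfl fun z _ => by rw [hF1 z T hT]; rfl

theorem hasZeroConstituent_ncard_latticePoints_biUnion {d : ℕ} {κ : Type*} (s : Finset κ)
    {R : κ → Set (Fin d → ℝ)} (hdisj : (s : Set κ).PairwiseDisjoint R)
    (hR : ∀ k ∈ s, R k ∈ rationalSets (Fin d)) (ho : ∀ k ∈ s, IsOpen (R k))
    (hc : ∀ k ∈ s, Convex ℝ (R k)) (hne : ∀ k ∈ s, (R k).Nonempty)
    (hb : ∀ k ∈ s, Bornology.IsBounded (R k)) :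
    HasZeroConstituent (fun T => (latticePoints (⋃ k ∈ s, R k) T).ncard) (s.card * (-1) ^ d) := by
  rw [← nsmul_eq_mul, ← Finset.sum_const]
  refine (HasZeroConstituent.sum s fun k hk => hasZeroConstituent_ncard_latticePoints
    (hR k hk) (ho k hk) (hc k hk) (hne k hk) (hb k hk)).congr fun T hT => ?_
  have hunion : latticePoints (⋃ k ∈ s, R k) T = ⋃ k ∈ s, latticePoints (R k) T := by
    ext z
    simp only [latticePoints, Set.mem_iUnion, Set.mem_ofPred_eq]
  have hdisjT : (s : Set κ).PairwiseDisjoint fun k => latticePoints (R k) T :=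
    fun k hk l hl hkl => (hdisj hk hl hkl).preimage _
  rw [hunion]
  have h := Set.Finite.ncard_biUnion s.finite_toSet
    (fun k hk => finite_latticePoints (hb k hk) hT) hdisjT
  rw [finsum_mem_coe_finset] at h
  simp only [Finset.sum_apply, ← Nat.cast_sum, ← h, Finset.mem_coe]

/-! ### Rational polygons and hyperplane arrangements -/

theorem eq_zero_of_mem_interior_convexHull {E : Type*} [NormedAddCommGroup E] [NormedSpace ℝ E]
    {s : Set E} {x : E} (hx : x ∈ interior (convexHull ℝ s)) {f : E →L[ℝ] ℝ}
    (hf : ∀ y ∈ s, f y ≤ f x) : f = 0 := by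
  have hhull : convexHull ℝ s ⊆ {y | f y ≤ f x} :=
    convexHull_min hf (convex_halfSpace_le f.isLinear _)
  have hmax : IsLocalMax f x :=
    Filter.mem_of_superset (mem_interior_iff_mem_nhds.mp hx) hhull
  exact hmax.hasFDerivAt_eq_zero f.hasFDerivAt

/-- The planar cross product `u.1 * v.2 - u.2 * v.1`, positive when `v` lies to the left of `u`. -/
noncomputable def cross (u : ℝ × ℝ) : ℝ × ℝ →L[ℝ] ℝ :=
  u.1 • ContinuousLinearMap.snd ℝ ℝ ℝ - u.2 • ContinuousLinearMap.fst ℝ ℝ ℝ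

theorem cross_apply (u v : ℝ × ℝ) : cross u v = u.1 * v.2 - u.2 * v.1 :=
  rfl

theorem cross_self (u : ℝ × ℝ) : cross u u = 0 := by
  rw [cross_apply, mul_comm, sub_self]

theorem cross_neg (u v : ℝ × ℝ) : cross (-u) v = -cross u v := by
  simp only [cross_apply, Prod.fst_neg, Prod.snd_neg]
  ring

theorem cross_eq_zero {u : ℝ × ℝ} : cross u = 0 ↔ u = 0 := by
  refine ⟨fun h => ?_, fun h => by ext <;> simp [cross_apply, h]⟩
  ext
  · simpa [cross_apply] using DFunLike.congr_fun h (0, 1)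
  · simpa [cross_apply] using DFunLike.congr_fun h (1, 0)

theorem exists_eq_smul_cross {u : ℝ × ℝ} (hu : u ≠ 0) {L : ℝ × ℝ →L[ℝ] ℝ} (hL : L u = 0) :
    ∃ μ : ℝ, L = μ • cross u := by
  have hu_eq : u = u.1 • (1, 0) + u.2 • (0, 1) := by ext <;> simp
  have hLu : u.1 * L (1, 0) + u.2 * L (0, 1) = 0 := by
    rw [← smul_eq_mul, ← smul_eq_mul, ← map_smul, ← map_smul, ← map_add, ← hu_eq, hL]
  have hsq : u.1 ^ 2 + u.2 ^ 2 ≠ 0 := by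
    contrapose! hu
    ext <;> simp <;> nlinarith
  refine ⟨(u.1 * L (0, 1) - u.2 * L (1, 0)) / (u.1 ^ 2 + u.2 ^ 2), ?_⟩
  ext
  · simp only [ContinuousLinearMap.comp_apply, ContinuousLinearMap.inl_apply, cross_apply,
      smul_apply, smul_eq_mul]
    field_simp
    linear_combination u.1 * hLu
  · simp only [ContinuousLinearMap.comp_apply, ContinuousLinearMap.inr_apply, cross_apply,
      smul_apply, smul_eq_mul]
    field_simp
    linear_combination u.2 * hLu

theorem exists_pos_cross_of_interior {V : Finset (ℝ × ℝ)}
    (hV : (interior (convexHull ℝ (V : Set (ℝ × ℝ)))).Nonempty) {d : ℝ × ℝ} (hd : d ≠ 0)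
    (a : ℝ × ℝ) : ∃ e, (e = d ∨ e = -d) ∧ ∃ s ∈ V, 0 < cross e (s - a) := by
  obtain ⟨y, hy⟩ := hV
  have hexists {e : ℝ × ℝ} (he : e ≠ 0) : ∃ s ∈ V, cross e y < cross e s := by
    by_contra! h
    exact he (cross_eq_zero.mp (eq_zero_of_mem_interior_convexHull hy h))
  rcases le_total (cross d a) (cross d y) with h | h
  · obtain ⟨s, hs, hys⟩ := hexists hd
    exact ⟨d, .inl rfl, s, hs, by rw [map_sub]; linarith⟩
  · obtain ⟨s, hs, hys⟩ := hexists (neg_ne_zero.mpr hd)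
    exact ⟨-d, .inr rfl, s, hs, by simp only [cross_neg, map_sub] at *; linarith⟩

theorem exists_linearMap_of_notMem_convexHull {V : Finset (ℝ × ℝ)}
    (hV : (interior (convexHull ℝ (V : Set (ℝ × ℝ)))).Nonempty) {x : ℝ × ℝ}
    (hx : x ∉ convexHull ℝ (V : Set (ℝ × ℝ))) :
    ∃ a ∈ V, ∃ b ∈ V, a ≠ b ∧ ∃ L : ℝ × ℝ →L[ℝ] ℝ, L (b - a) = 0 ∧ ∀ s ∈ V, L (s - x) < 0 := by
  obtain ⟨f, u, hfV, hfx⟩ := geometric_hahn_banach_closed_point (convex_convexHull ℝ _)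
    (V.finite_toSet.isClosed_convexHull ℝ) hx
  replace hfV (s) (hs : s ∈ V) : f s < f x := (hfV s (subset_convexHull ℝ _ hs)).trans hfx
  have hVne : V.Nonempty := by
    rw [← Finset.coe_nonempty, ← convexHull_nonempty_iff (𝕜 := ℝ)]
    exact hV.mono interior_subset
  obtain ⟨a, ha, hmax⟩ := V.exists_max_image f hVne
  have hxa : x - a ≠ 0 := sub_ne_zero.mpr fun h => (hfV a ha).ne (by rw [h])
  obtain ⟨d, hd, s₀, hs₀, hds₀⟩ := exists_pos_cross_of_interior hV hxa a
  have hdx : cross d (x - a) = 0 := by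
    rcases hd with rfl | rfl <;> simp only [cross_neg, cross_self, neg_zero]
  -- Tilting `f` about the line through `a` and `x` until it meets a further point `b` of `V`.
  obtain ⟨b, hb, hmin⟩ := {s ∈ V | 0 < cross d (s - a)}.exists_min_image
    (fun s => f (a - s) / cross d (s - a)) ⟨s₀, Finset.mem_filter.mpr ⟨hs₀, hds₀⟩⟩
  rw [Finset.mem_filter] at hb
  set ε := f (a - b) / cross d (b - a)
  have hε : 0 ≤ ε := div_nonneg (by rw [map_sub]; linarith [hmax b hb.1]) hb.2.le
  have htilt (s) (hs : s ∈ V) : f (s - a) + ε * cross d (s - a) ≤ 0 := by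
    have hfs : f (a - s) = -f (s - a) := by rw [← map_neg, neg_sub]
    rcases le_or_gt (cross d (s - a)) 0 with hds | hds
    · linarith [mul_nonpos_of_nonneg_of_nonpos hε hds, hmax s hs, map_sub f s a]
    · linarith [(le_div_iff₀ hds).mp (hmin s (Finset.mem_filter.mpr ⟨hs, hds⟩))]
  refine ⟨a, ha, b, hb.1, ?_, f + ε • cross d, ?_, fun s hs => ?_⟩
  · rintro rfl
    simp at hb
  · rw [add_apply, smul_apply, smul_eq_mul, div_mul_cancel₀ _ hb.2.ne', ← map_add]
    simp
  · have hsx : s - x = (s - a) - (x - a) := (sub_sub_sub_cancel_right s x a).symm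
    rw [add_apply, smul_apply, smul_eq_mul, hsx, map_sub, map_sub (cross d), hdx, sub_zero]
    linarith [htilt s hs, hfV a ha, map_sub f x a]

theorem exists_separating_edge {V : Finset (ℝ × ℝ)}
    (hV : (interior (convexHull ℝ (V : Set (ℝ × ℝ)))).Nonempty) {x : ℝ × ℝ}
    (hx : x ∉ convexHull ℝ (V : Set (ℝ × ℝ))) :
    ∃ a ∈ V, ∃ b ∈ V, a ≠ b ∧ ∀ s ∈ V, cross (b - a) (s - x) ≤ 0 := by
  obtain ⟨a, ha, b, hb, hab, L, hL, hLV⟩ := exists_linearMap_of_notMem_convexHull hV hx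
  obtain ⟨μ, rfl⟩ := exists_eq_smul_cross (sub_ne_zero.mpr hab.symm) hL
  rcases le_total 0 μ with hμ | hμ
  · exact ⟨a, ha, b, hb, hab, fun s hs => (neg_of_mul_neg_right (hLV s hs) hμ).le⟩
  · refine ⟨b, hb, a, ha, hab.symm, fun s hs => ?_⟩
    rw [← neg_sub b a, cross_neg, neg_nonpos]
    exact (pos_of_mul_neg_right (hLV s hs) hμ).le

theorem interior_convexHull_eq {V : Finset (ℝ × ℝ)}
    (hV : (interior (convexHull ℝ (V : Set (ℝ × ℝ)))).Nonempty) :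
    interior (convexHull ℝ (V : Set (ℝ × ℝ))) =
      ⋂ e ∈ V.offDiag, ⋃ s ∈ V, {x | 0 < cross (e.2 - e.1) (s - x)} := by
  refine subset_antisymm (fun x hx => ?_) (interior_maximal (fun x hx => ?_) ?_)
  · simp only [Set.mem_iInter, Set.mem_iUnion, Set.mem_ofPred_eq, exists_prop, map_sub, sub_pos]
    intro e he
    by_contra! h
    refine (Finset.mem_offDiag.mp he).2.2 (sub_eq_zero.mp ?_).symm
    exact cross_eq_zero.mp (eq_zero_of_mem_interior_convexHull hx h)
  · by_contra hxV
    obtain ⟨a, ha, b, hb, hab, h⟩ := exists_separating_edge hV hxV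
    simp only [Set.mem_iInter, Set.mem_iUnion] at hx
    obtain ⟨s, hs, hpos⟩ := hx (a, b) (Finset.mem_offDiag.mpr ⟨ha, hb, hab⟩)
    exact (h s hs).not_gt hpos
  · exact isOpen_biInter_finset fun e _ => isOpen_biUnion fun s _ =>
      isOpen_lt continuous_const (by fun_prop)

section Arrangement

variable {E : Type*} [AddCommGroup E] [Module ℝ E] [TopologicalSpace E]

/-- The complement in `U` of the hyperplanes `{f = 0}`, for `f ∈ A`. -/
def arrangementCompl (U : Set E) (A : Set (E →ᴬ[ℝ] ℝ)) : Set E :=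
  {z ∈ U | ∀ f ∈ A, f z ≠ 0}

/-- The points of `U` strictly on the same side as `z₀` of every hyperplane `{f = 0}`, `f ∈ A`. -/
def cell (U : Set E) (A : Set (E →ᴬ[ℝ] ℝ)) (z₀ : E) : Set E :=
  U ∩ ⋂ f ∈ A, {z | 0 < f z₀ * f z}

variable {U : Set E} {A : Set (E →ᴬ[ℝ] ℝ)} {z z₀ : E}

theorem mem_cell : z ∈ cell U A z₀ ↔ z ∈ U ∧ ∀ f ∈ A, 0 < f z₀ * f z := by
  simp only [cell, Set.mem_inter_iff, Set.mem_iInter, Set.mem_ofPred_eq]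

theorem mem_cell_self (hz : z ∈ arrangementCompl U A) : z ∈ cell U A z :=
  mem_cell.mpr ⟨hz.1, fun f hf => mul_self_pos.mpr (hz.2 f hf)⟩

theorem cell_subset_arrangementCompl : cell U A z₀ ⊆ arrangementCompl U A := fun _ hz =>
  ⟨hz.1, fun f hf => right_ne_zero_of_mul ((mem_cell.mp hz).2 f hf).ne'⟩

theorem isOpen_cell (hU : IsOpen U) (hA : A.Finite) : IsOpen (cell U A z₀) :=
  hU.inter (hA.isOpen_biInter fun f _ => isOpen_lt continuous_const (by fun_prop))

theorem convex_cell (hU : Convex ℝ U) : Convex ℝ (cell U A z₀) :=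
  hU.inter (convex_iInter₂ fun f _ =>
    ((convex_Ioi 0).is_linear_preimage (IsLinearMap.isLinearMap_smul (f z₀))).affine_preimage
      f.toAffineMap)

theorem connectedComponentIn_arrangementCompl [ContinuousAdd E] [ContinuousSMul ℝ E]
    (hU : Convex ℝ U) (hz₀ : z₀ ∈ arrangementCompl U A) :
    connectedComponentIn (arrangementCompl U A) z₀ = cell U A z₀ := by
  refine subset_antisymm (fun z hz => mem_cell.mpr
    ⟨(connectedComponentIn_subset _ _ hz).1, fun f hf => ?_⟩)
    ((convex_cell hU).isPreconnected.subset_connectedComponentIn (mem_cell_self hz₀)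
      cell_subset_arrangementCompl)
  by_contra! hneg
  obtain ⟨w, hw, hw0⟩ := isPreconnected_connectedComponentIn.intermediate_value hz
    (mem_connectedComponentIn hz₀) (f := fun z => f z₀ * f z) (by fun_prop)
    ⟨hneg, mul_self_nonneg _⟩
  exact mul_ne_zero (hz₀.2 f hf) ((connectedComponentIn_subset _ _ hw).2 f hf) hw0

theorem finite_setOf_cell (hA : A.Finite) :
    {C | ∃ z ∈ arrangementCompl U A, C = cell U A z}.Finite := by
  have := hA.to_subtype
  refine (Set.finite_range fun σ : A → SignType =>
    U ∩ {z | ∀ f : A, SignType.sign (f.1 z) = σ f}).subset ?_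
  rintro _ ⟨z₀, hz₀, rfl⟩
  refine ⟨fun f => SignType.sign (f.1 z₀), Set.ext fun z => ?_⟩
  simp only [mem_cell, Set.mem_inter_iff, Set.mem_ofPred_eq, Subtype.forall]
  refine and_congr_right fun _ => forall₂_congr fun f hf => ?_
  rcases (hz₀.2 f hf).lt_or_gt with h | h
  · rw [sign_neg h, sign_eq_neg_one_iff, ← neg_mul_neg,
      mul_pos_iff_of_pos_left (neg_pos.mpr h), neg_pos]
  · rw [sign_pos h, sign_eq_one_iff, mul_pos_iff_of_pos_left h]

end Arrangement

/-- The set of connected components of the subspace `s`. -/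
def componentsIn {X : Type*} [TopologicalSpace X] (s : Set X) : Set (Set X) :=
  {C | ∃ z ∈ s, C = connectedComponentIn s z}

theorem ncard_componentsIn_preimage {X Y : Type*} [TopologicalSpace X] [TopologicalSpace Y]
    (h : X ≃ₜ Y) (s : Set Y) : (componentsIn (h ⁻¹' s)).ncard = (componentsIn s).ncard := by
  rw [← Set.ncard_image_of_injective _ (Set.image_injective.mpr h.injective)]
  congr 1
  have himage {x : X} (hx : h x ∈ s) :
      h '' connectedComponentIn (h ⁻¹' s) x = connectedComponentIn s (h x) := by
    rw [h.image_connectedComponentIn hx, h.image_preimage]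
  refine subset_antisymm ?_ ?_
  · rintro _ ⟨_, ⟨x, hx, rfl⟩, rfl⟩
    exact ⟨h x, hx, himage hx⟩
  · rintro _ ⟨y, hy, rfl⟩
    obtain ⟨x, rfl⟩ := h.surjective y
    exact ⟨_, ⟨x, hy, rfl⟩, himage hy⟩

theorem biUnion_componentsIn {X : Type*} [TopologicalSpace X] (s : Set X) :
    ⋃ C ∈ componentsIn s, C = s := by
  refine subset_antisymm (Set.iUnion₂_subset ?_) fun z hz =>
    Set.mem_biUnion ⟨z, hz, rfl⟩ (mem_connectedComponentIn hz)
  rintro _ ⟨z, -, rfl⟩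
  exact connectedComponentIn_subset _ _

theorem pairwiseDisjoint_componentsIn {X : Type*} [TopologicalSpace X] (s : Set X) :
    (componentsIn s).PairwiseDisjoint id := by
  rintro _ ⟨z, -, rfl⟩ _ ⟨w, -, rfl⟩ hne
  exact Set.disjoint_left.mpr fun x hx hx' =>
    hne ((connectedComponentIn_eq hx).trans (connectedComponentIn_eq hx').symm)

theorem cell_mem_rationalSets {ι : Type*} [Fintype ι] {U : Set (ι → ℝ)}
    {A : Set ((ι → ℝ) →ᴬ[ℝ] ℝ)} (hU : U ∈ rationalSets ι) (hA : A.Finite)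
    (hAr : ∀ f ∈ A, ⇑f ∈ rationalAffine ι) {z : ι → ℝ} (hz : z ∈ arrangementCompl U A) :
    cell U A z ∈ rationalSets ι := by
  refine BooleanSubalgebra.inf_mem hU (BooleanSubalgebra.biInf_mem hA fun f hf => ?_)
  rcases (hz.2 f hf).lt_or_gt with h | h
  · convert setOf_pos_mem_rationalSets (neg_mem (hAr f hf)) using 3 with x
    rw [← neg_mul_neg, mul_pos_iff_of_pos_left (neg_pos.mpr h), Pi.neg_apply]
  · convert setOf_pos_mem_rationalSets (hAr f hf) using 3 with x
    rw [mul_pos_iff_of_pos_left h]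

theorem hasZeroConstituent_ncard_latticePoints_arrangementCompl {d : ℕ} {U : Set (Fin d → ℝ)}
    {A : Set ((Fin d → ℝ) →ᴬ[ℝ] ℝ)} (hU : U ∈ rationalSets (Fin d)) (ho : IsOpen U)
    (hc : Convex ℝ U) (hb : Bornology.IsBounded U) (hA : A.Finite)
    (hAr : ∀ f ∈ A, ⇑f ∈ rationalAffine (Fin d)) :
    HasZeroConstituent (fun T => (latticePoints (arrangementCompl U A) T).ncard)
      ((componentsIn (arrangementCompl U A)).ncard * (-1) ^ d) := by
  set Ω := arrangementCompl U A
  have hcell (C) (hC : C ∈ componentsIn Ω) : ∃ z ∈ Ω, C = cell U A z := by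
    obtain ⟨z, hz, rfl⟩ := hC
    exact ⟨z, hz, connectedComponentIn_arrangementCompl hc hz⟩
  have hfin : (componentsIn Ω).Finite := (finite_setOf_cell hA).subset hcell
  have hprop (C) (hC : C ∈ hfin.toFinset) : C ∈ rationalSets (Fin d) ∧ IsOpen C ∧ Convex ℝ C ∧
      C.Nonempty ∧ Bornology.IsBounded C := by
    obtain ⟨z, hz, rfl⟩ := hcell C (hfin.mem_toFinset.mp hC)
    exact ⟨cell_mem_rationalSets hU hA hAr hz, isOpen_cell ho hA, convex_cell hc,
      ⟨z, mem_cell_self hz⟩, hb.subset Set.inter_subset_left⟩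
  have hdisj : (hfin.toFinset : Set (Set (Fin d → ℝ))).PairwiseDisjoint id := by
    simpa only [hfin.coe_toFinset] using pairwiseDisjoint_componentsIn Ω
  have hunion : ⋃ C ∈ hfin.toFinset, id C = Ω := by
    simpa only [hfin.mem_toFinset, id] using biUnion_componentsIn Ω
  have hcount := hasZeroConstituent_ncard_latticePoints_biUnion hfin.toFinset hdisj
    (fun C hC => (hprop C hC).1) (fun C hC => (hprop C hC).2.1) (fun C hC => (hprop C hC).2.2.1)
    (fun C hC => (hprop C hC).2.2.2.1) (fun C hC => (hprop C hC).2.2.2.2)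
  rwa [hunion, ← Set.ncard_eq_toFinset_card _ hfin] at hcount

theorem setOf_mk_mem_interior_mem_rationalSets {ι : Type*} [Fintype ι] {V : Finset (ℝ × ℝ)}
    (hV : ∀ v ∈ V, ∃ a b : ℚ, v = ((a : ℝ), (b : ℝ)))
    (hint : (interior (convexHull ℝ (V : Set (ℝ × ℝ)))).Nonempty) {α β : (ι → ℝ) → ℝ}
    (hα : α ∈ rationalAffine ι) (hβ : β ∈ rationalAffine ι) :
    {x | (α x, β x) ∈ interior (convexHull ℝ (V : Set (ℝ × ℝ)))} ∈ rationalSets ι := by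
  have hedges : {x | (α x, β x) ∈ interior (convexHull ℝ (V : Set (ℝ × ℝ)))} =
      ⋂ e ∈ (V.offDiag : Set ((ℝ × ℝ) × (ℝ × ℝ))), ⋃ s ∈ (V : Set (ℝ × ℝ)),
        {x | 0 < cross (e.2 - e.1) (s - (α x, β x))} := by
    ext x
    simp only [interior_convexHull_eq hint, Set.mem_iInter, Set.mem_iUnion, Set.mem_ofPred_eq,
      Finset.mem_coe]
  rw [hedges]
  refine BooleanSubalgebra.biInf_mem V.offDiag.finite_toSet fun e he =>
    BooleanSubalgebra.biSup_mem V.finite_toSet fun s hs => setOf_pos_mem_rationalSets ?_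
  obtain ⟨ha, hb, -⟩ := Finset.mem_offDiag.mp he
  obtain ⟨a₁, a₂, ha⟩ := hV _ ha
  obtain ⟨b₁, b₂, hb⟩ := hV _ hb
  obtain ⟨s₁, s₂, rfl⟩ := hV _ hs
  convert sub_mem
    (Submodule.smul_mem _ (b₁ - a₁) (sub_mem (const_mem_rationalAffine s₂) hβ))
    (Submodule.smul_mem _ (b₂ - a₂) (sub_mem (const_mem_rationalAffine s₁) hα)) using 2 with x
  simp [cross_apply, ha, hb, Rat.smul_def]

/-! ### Nonattacking configurations -/

/-- The configuration of `q` planar points with the given `2 * q` coordinates, all the first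
coordinates coming before all the second ones. -/
def pairUp (α : Type*) (q : ℕ) : (Fin (q + q) → α) ≃ (Fin q → α × α) :=
  (Fin.appendEquiv q q).symm.trans (Equiv.arrowProdEquivProdArrow (Fin q) _ _).symm

theorem pairUp_apply {α : Type*} {q : ℕ} (x : Fin (q + q) → α) (i : Fin q) :
    pairUp α q x i = (x (Fin.castAdd q i), x (Fin.natAdd q i)) :=
  rfl

/-- `pairUp` as a homeomorphism. -/
def pairUpHomeomorph (α : Type*) [TopologicalSpace α] (q : ℕ) :
    (Fin (q + q) → α) ≃ₜ (Fin q → α × α) where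
  toEquiv := pairUp α q
  continuous_toFun := by
    simp only [Equiv.toFun_as_coe]
    refine continuous_pi fun i => ?_
    simp only [pairUp_apply]
    fun_prop
  continuous_invFun := (Fin.appendHomeomorph q q).continuous.comp
    (f := fun z : Fin q → α × α => (fun i => (z i).1, fun i => (z i).2)) (by fun_prop)

theorem isBounded_preimage_pairUp {q : ℕ} {s : Set (ℝ × ℝ)} (hs : Bornology.IsBounded s) :
    Bornology.IsBounded (pairUp ℝ q ⁻¹' Set.univ.pi fun _ => s) := by
  refine Bornology.forall_isBounded_image_eval_iff.mp (Fin.addCases (fun i => ?_) fun i => ?_)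
  · exact hs.image_fst.subset (Set.image_subset_iff.mpr fun x hx =>
      ⟨pairUp ℝ q x i, hx i trivial, rfl⟩)
  · exact hs.image_snd.subset (Set.image_subset_iff.mpr fun x hx =>
      ⟨pairUp ℝ q x i, hx i trivial, rfl⟩)

theorem convex_preimage_pairUp {q : ℕ} {s : Set (ℝ × ℝ)} (hs : Convex ℝ s) :
    Convex ℝ (pairUp ℝ q ⁻¹' Set.univ.pi fun _ => s) :=
  (convex_pi fun _ _ => hs).is_linear_preimage ⟨fun _ _ => rfl, fun _ _ => rfl⟩

theorem preimage_pairUp_mem_rationalSets {q : ℕ} {V : Finset (ℝ × ℝ)}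
    (hV : ∀ v ∈ V, ∃ a b : ℚ, v = ((a : ℝ), (b : ℝ)))
    (hint : (interior (convexHull ℝ (V : Set (ℝ × ℝ)))).Nonempty) :
    (pairUp ℝ q ⁻¹' Set.univ.pi fun _ => interior (convexHull ℝ (V : Set (ℝ × ℝ)))) ∈
      rationalSets (Fin (q + q)) := by
  have hpieces : (pairUp ℝ q ⁻¹' Set.univ.pi fun _ => interior (convexHull ℝ (V : Set (ℝ × ℝ)))) =
      ⋂ i : Fin q, {x | (x (Fin.castAdd q i), x (Fin.natAdd q i)) ∈
        interior (convexHull ℝ (V : Set (ℝ × ℝ)))} := by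
    ext x
    simp only [Set.mem_preimage, Set.mem_univ_pi, Set.mem_iInter, Set.mem_ofPred_eq, pairUp_apply]
  rw [hpieces]
  exact BooleanSubalgebra.iInf_mem fun i => setOf_mk_mem_interior_mem_rationalSets hV hint
    (eval_mem_rationalAffine _) (eval_mem_rationalAffine _)

/-- The defining form `(z_j - z_i) · m^⊥` of the move hyperplane `H^m_{ij}`, in the coordinates of
`pairUp`. -/
noncomputable def moveForm {q : ℕ} (m : ℤ × ℤ) (i j : Fin q) : (Fin (q + q) → ℝ) →L[ℝ] ℝ :=
  (m.2 : ℝ) • (.proj (Fin.castAdd q j) - .proj (Fin.castAdd q i)) -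
    (m.1 : ℝ) • (.proj (Fin.natAdd q j) - .proj (Fin.natAdd q i))

theorem moveForm_apply {q : ℕ} (m : ℤ × ℤ) (i j : Fin q) (x : Fin (q + q) → ℝ) :
    moveForm m i j x = ((pairUp ℝ q x j).1 - (pairUp ℝ q x i).1) * m.2 -
      ((pairUp ℝ q x j).2 - (pairUp ℝ q x i).2) * m.1 := by
  simp [moveForm, pairUp_apply, mul_comm]

theorem moveForm_mem_rationalAffine {q : ℕ} (m : ℤ × ℤ) (i j : Fin q) :
    ⇑(moveForm m i j) ∈ rationalAffine (Fin (q + q)) := by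
  convert sub_mem
    (Submodule.smul_mem _ (m.2 : ℚ) (sub_mem (eval_mem_rationalAffine (Fin.castAdd q j))
      (eval_mem_rationalAffine (Fin.castAdd q i))))
    (Submodule.smul_mem _ (m.1 : ℚ) (sub_mem (eval_mem_rationalAffine (Fin.natAdd q j))
      (eval_mem_rationalAffine (Fin.natAdd q i)))) using 1
  ext x
  simp [moveForm, Rat.smul_def]

/-- The move arrangement `A_P^q`, in the coordinates of `pairUp`. -/
noncomputable def moveArrangement (q : ℕ) (M : Finset (ℤ × ℤ)) :
    Set ((Fin (q + q) → ℝ) →ᴬ[ℝ] ℝ) :=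
  {f | ∃ i j, i ≠ j ∧ ∃ m ∈ M, (moveForm m i j).toContinuousAffineMap = f}

theorem finite_moveArrangement (q : ℕ) (M : Finset (ℤ × ℤ)) : (moveArrangement q M).Finite := by
  refine ((Set.finite_univ.prod (Set.finite_univ.prod M.finite_toSet)).image
    fun k : Fin q × Fin q × (ℤ × ℤ) => (moveForm k.2.2 k.1 k.2.1).toContinuousAffineMap).subset ?_
  rintro _ ⟨i, j, -, m, hm, rfl⟩
  exact ⟨(i, j, m), ⟨trivial, trivial, hm⟩, rfl⟩

/-- The complement in `I^q` of the move arrangement `A_P^q` of the piece with basic moves `M`. -/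
def configurations (q : ℕ) (M : Finset (ℤ × ℤ)) (I : Set (ℝ × ℝ)) : Set (Fin q → ℝ × ℝ) :=
  {z | (∀ i, z i ∈ I) ∧ ∀ i j : Fin q, i ≠ j → ∀ m ∈ M,
    ((z j).1 - (z i).1) * (m.2 : ℝ) - ((z j).2 - (z i).2) * (m.1 : ℝ) ≠ 0}

/-- The placements of `q` labelled, pairwise nonattacking pieces with basic moves `M` on distinct
integer points of the board `T • I`. -/
def placements (q : ℕ) (M : Finset (ℤ × ℤ)) (I : Set (ℝ × ℝ)) (T : ℕ) : Set (Fin q → ℤ × ℤ) :=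
  {z | Function.Injective z ∧
    (∀ i, (((z i).1 : ℝ), ((z i).2 : ℝ)) ∈ (T : ℝ) • I) ∧
    ∀ i j : Fin q, i ≠ j → ∀ m ∈ M, ((z j).1 - (z i).1) * m.2 - ((z j).2 - (z i).2) * m.1 ≠ 0}

variable {q : ℕ} {M : Finset (ℤ × ℤ)}

theorem preimage_pairUp_configurations (I : Set (ℝ × ℝ)) :
    pairUp ℝ q ⁻¹' configurations q M I =
      arrangementCompl (pairUp ℝ q ⁻¹' Set.univ.pi fun _ => I) (moveArrangement q M) := by
  ext x
  refine and_congr Set.mem_univ_pi.symm ⟨?_, fun h i j hij m hm => ?_⟩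
  · rintro h _ ⟨i, j, hij, m, hm, rfl⟩
    exact (moveForm_apply m i j x).trans_ne (h i j hij m hm)
  · rw [← moveForm_apply]
    exact h _ ⟨i, j, hij, m, hm, rfl⟩

theorem injective_of_nonattacking (hM : M.Nonempty) {z : Fin q → ℤ × ℤ}
    (hz : ∀ i j : Fin q, i ≠ j → ∀ m ∈ M,
      ((z j).1 - (z i).1) * m.2 - ((z j).2 - (z i).2) * m.1 ≠ 0) : Function.Injective z := by
  obtain ⟨m, hm⟩ := hM
  intro i j hij
  by_contra hne
  exact hz i j hne m hm (by rw [hij]; ring)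

theorem preimage_pairUp_placements (hM : M.Nonempty) (I : Set (ℝ × ℝ)) {T : ℕ} (hT : 0 < T) :
    pairUp ℤ q ⁻¹' placements q M I T =
      latticePoints (pairUp ℝ q ⁻¹' configurations q M I) T := by
  have hT' : (T : ℝ)⁻¹ ≠ 0 := by positivity
  ext x
  refine (and_iff_right_of_imp fun h => injective_of_nonattacking hM h.2).trans
    (and_congr (forall_congr' fun i => ?_) <| forall₅_congr fun i j _ m _ => ?_)
  · rw [Set.mem_smul_set_iff_inv_smul_mem₀ (by positivity)]
    rfl
  · have hscale : ((T : ℝ)⁻¹ * x (Fin.castAdd q j) - (T : ℝ)⁻¹ * x (Fin.castAdd q i)) * m.2 -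
        ((T : ℝ)⁻¹ * x (Fin.natAdd q j) - (T : ℝ)⁻¹ * x (Fin.natAdd q i)) * m.1 =
        (T : ℝ)⁻¹ * (((x (Fin.castAdd q j) - x (Fin.castAdd q i)) * m.2 -
          (x (Fin.natAdd q j) - x (Fin.natAdd q i)) * m.1 : ℤ) : ℝ) := by
      push_cast
      ring
    exact not_congr <| (hscale ▸ (mul_eq_zero_iff_left hT').trans Int.cast_eq_zero).symm

theorem hasZeroConstituent_ncard_placements (hM : M.Nonempty) {V : Finset (ℝ × ℝ)}
    (hV : ∀ v ∈ V, ∃ a b : ℚ, v = ((a : ℝ), (b : ℝ)))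
    (hint : (interior (convexHull ℝ (V : Set (ℝ × ℝ)))).Nonempty) :
    HasZeroConstituent
      (fun T => (placements q M (interior (convexHull ℝ (V : Set (ℝ × ℝ)))) T).ncard)
      (componentsIn (configurations q M (interior (convexHull ℝ (V : Set (ℝ × ℝ)))))).ncard := by
  set I := interior (convexHull ℝ (V : Set (ℝ × ℝ)))
  have hI : Bornology.IsBounded I :=
    (isBounded_convexHull.mpr V.finite_toSet.isBounded).subset interior_subset
  have hopen : IsOpen (pairUp ℝ q ⁻¹' Set.univ.pi fun _ => I) :=
    (isOpen_set_pi Set.finite_univ fun _ _ => isOpen_interior).preimage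
      (pairUpHomeomorph ℝ q).continuous
  have hrat (f) (hf : f ∈ moveArrangement q M) : ⇑f ∈ rationalAffine (Fin (q + q)) := by
    obtain ⟨i, j, -, m, -, rfl⟩ := hf
    exact moveForm_mem_rationalAffine m i j
  have hcount := hasZeroConstituent_ncard_latticePoints_arrangementCompl
    (preimage_pairUp_mem_rationalSets hV hint) hopen
    (convex_preimage_pairUp (convex_convexHull ℝ _).interior) (isBounded_preimage_pairUp hI)
    (finite_moveArrangement q M) hrat
  rw [← preimage_pairUp_configurations, (Even.add_self q).neg_one_pow, mul_one] at hcount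
  rw [← ncard_componentsIn_preimage (pairUpHomeomorph ℝ q)]
  refine hcount.congr fun T hT => ?_
  rw [← preimage_pairUp_placements hM I hT, Set.ncard_preimage_of_injective_subset_range
    (pairUp ℤ q).injective (by simp only [(pairUp ℤ q).range_eq_univ, Set.subset_univ])]

end Ehrhart

/-- the number of connected components of `(B°)^q \ ⋃A_P^q`, i.e. of labelled
nonattacking configuration types, equals the value at `n = -1` of the constituent of
`o_P(q;n)` corresponding to `n ≡ -1 (mod p)`. -/
theorem stmt_8
    (M : Finset (ℤ × ℤ)) (hMne : M.Nonempty)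
    (hMmove : ∀ m ∈ M, m ≠ 0 ∧ Int.gcd m.1 m.2 = 1)
    (hMpar : ∀ m ∈ M, ∀ m' ∈ M, m ≠ m' → m.1 * m'.2 - m.2 * m'.1 ≠ 0)
    (V : Finset (ℝ × ℝ)) (hV : ∀ v ∈ V, ∃ a b : ℚ, v = ((a : ℝ), (b : ℝ)))
    (B : Set (ℝ × ℝ)) (hB : B = convexHull ℝ (V : Set (ℝ × ℝ)))
    (hBint : (interior B).Nonempty)
    (q : ℕ) (hq : 0 < q)
    (o : ℕ → ℕ)
    (ho : ∀ n : ℕ, o n = Set.ncard {z : Fin q → ℤ × ℤ |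
      Function.Injective z ∧
      (∀ i : Fin q, ((((z i).1 : ℝ), ((z i).2 : ℝ)) : ℝ × ℝ) ∈ ((n : ℝ) + 1) • interior B) ∧
      (∀ i j : Fin q, i ≠ j → ∀ m ∈ M,
        ((z j).1 - (z i).1) * m.2 - ((z j).2 - (z i).2) * m.1 ≠ 0)})
    (Ω : Set (Fin q → ℝ × ℝ))
    (hΩ : Ω = {z : Fin q → ℝ × ℝ | (∀ i : Fin q, z i ∈ interior B) ∧
      ∀ i j : Fin q, i ≠ j → ∀ m ∈ M,
        ((z j).1 - (z i).1) * (m.2 : ℝ) - ((z j).2 - (z i).2) * (m.1 : ℝ) ≠ 0})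
    (p : ℕ) (hp : 0 < p)
    (f : ℕ → Polynomial ℚ)
    (hf : ∀ n : ℕ, (o n : ℚ) = (f (n % p)).eval (n : ℚ)) :
    (Set.ncard {C : Set (Fin q → ℝ × ℝ) | ∃ z ∈ Ω, C = connectedComponentIn Ω z} : ℚ)
      = (f (p - 1)).eval (-1) := by
  subst hB hΩ
  refine (Ehrhart.hasZeroConstituent_ncard_placements hMne hV hBint).eq_eval_neg_one hp fun n => ?_
  rw [← hf, ho, Ehrhart.placements, Nat.cast_succ]
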